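/- Let φ ∈ Γ₀(H) satisfy φ*(H) ⊂ (−∞,0] ∪ {+∞} and (φ*)⁻¹((−∞,0)) ≠ ∅, let s ∈ Γ₀(G) be such that S = s⁻¹((0,+∞)) ≠ ∅, let γ ∈ (0,+∞), and let (x,y) ∈ Ξ₂. Then the unique η ∈ [0,+∞) satisfying φ*( prox_{((1/γ)·s_▲(prox_{(γη)⊙s_▲} y))⊙φ*}(x/γ) ) + η = 0 equals 0, and prox_{γ(φ▷s)}(x,y) = ( x − γ·prox_{((1/γ)·s_▲(proj_{cl conv S} y))·φ*}(x/γ), proj_{cl conv S} y ). -/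

import Mathlib

open scoped Classical

noncomputable section

/-- Effective domain of an extended-real-valued function. -/
def edom {E : Type*} (f : E → EReal) : Set E := {x | f x < ⊤}

/-- Convexity of an extended-real-valued function, via its epigraph. -/
def ConvexEpi {E : Type*} [AddCommGroup E] [Module ℝ E] (f : E → EReal) : Prop :=
  Convex ℝ {p : E × ℝ | f p.1 ≤ (p.2 : EReal)}

/-- `f ∈ Γ₀(E)`: proper, lower semicontinuous, convex, with values in `(-∞, +∞]`. -/
def IsGamma0 {E : Type*} [AddCommGroup E] [Module ℝ E] [TopologicalSpace E]
    (f : E → EReal) : Prop :=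
  (∃ x, f x ≠ ⊤) ∧ (∀ x, f x ≠ ⊥) ∧ LowerSemicontinuous f ∧ ConvexEpi f

/-- Proximity operator: the (unique, for `f ∈ Γ₀`) minimizer of
`y ↦ f y + ‖x - y‖² / 2`. -/
def prox {E : Type*} [NormedAddCommGroup E] [InnerProductSpace ℝ E]
    (f : E → EReal) (x : E) : E :=
  Classical.epsilon fun p =>
    ∀ y, f p + ((‖x - p‖ ^ 2 / 2 : ℝ) : EReal) ≤ f y + ((‖x - y‖ ^ 2 / 2 : ℝ) : EReal)

/-- Metric projection onto a set. -/
def projC {E : Type*} [NormedAddCommGroup E] (C : Set E) (x : E) : E :=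
  Classical.epsilon fun p => p ∈ C ∧ ∀ y ∈ C, ‖x - p‖ ≤ ‖x - y‖

/-- Fenchel conjugate. -/
def fconj {E : Type*} [NormedAddCommGroup E] [InnerProductSpace ℝ E]
    (f : E → EReal) (y : E) : EReal :=
  ⨆ x, ((inner ℝ x y : ℝ) : EReal) - f x

/-- Plain scalar multiple `ξ·f`. -/
def smulE {E : Type*} (ξ : ℝ) (f : E → EReal) : E → EReal := fun x => (ξ : EReal) * f x

/-- The operation `ξ ⊙ f`: indicator of `cl (dom f)` if `ξ = 0`, and `ξ·f` if `ξ > 0`. -/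
def rscale {E : Type*} [TopologicalSpace E] (ξ : ℝ) (f : E → EReal) : E → EReal :=
  if ξ = 0 then fun x => if x ∈ closure (edom f) then (0 : EReal) else ⊤
  else fun x => (ξ : EReal) * f x

/-- `f^∨`: agrees with `f` where `-∞ < f < 0`, and is `+∞` elsewhere. -/
def pbas {E : Type*} (f : E → EReal) : E → EReal :=
  fun x => if ⊥ < f x ∧ f x < 0 then f x else ⊤

/-- `f^∧`: agrees with `f` where `0 < f < +∞`, and is `+∞` elsewhere. -/
def phaut {E : Type*} (f : E → EReal) : E → EReal :=
  fun x => if 0 < f x ∧ f x < ⊤ then f x else ⊤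

/-- `f_▽ = (f^∨)**`. -/
def basEnv {E : Type*} [NormedAddCommGroup E] [InnerProductSpace ℝ E]
    (f : E → EReal) : E → EReal :=
  fconj (fconj (pbas f))

/-- `f_▲ = (f^∧)**`. -/
def hautEnv {E : Type*} [NormedAddCommGroup E] [InnerProductSpace ℝ E]
    (f : E → EReal) : E → EReal :=
  fconj (fconj (phaut f))

/-- `S = s⁻¹((0, +∞))`. -/
def sdom {G : Type*} (s : G → EReal) : Set G := {v | 0 < s v ∧ s v < ⊤}

/-- The preperspective `φ ⋉ s`, on the Hilbert direct sum `H ⊕ G`. -/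
def prePersp {H G : Type*} [NormedAddCommGroup H] [InnerProductSpace ℝ H]
    [NormedAddCommGroup G] [InnerProductSpace ℝ G]
    (φ : H → EReal) (s : G → EReal) : WithLp 2 (H × G) → EReal := fun q =>
  if 0 < s ((WithLp.equiv 2 (H × G)) q).2 ∧ s ((WithLp.equiv 2 (H × G)) q).2 < ⊤ then
    s ((WithLp.equiv 2 (H × G)) q).2 *
      φ ((s ((WithLp.equiv 2 (H × G)) q).2).toReal⁻¹ • ((WithLp.equiv 2 (H × G)) q).1)
  else ⊤

/-- The perspective `φ ▷ s`: the largest lower semicontinuous convex minorant of the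
preperspective `φ ⋉ s`, on the Hilbert direct sum `H ⊕ G`. -/
def persp {H G : Type*} [NormedAddCommGroup H] [InnerProductSpace ℝ H]
    [NormedAddCommGroup G] [InnerProductSpace ℝ G]
    (φ : H → EReal) (s : G → EReal) : WithLp 2 (H × G) → EReal := fun q =>
  sSup {t : EReal | ∃ g : WithLp 2 (H × G) → EReal,
    LowerSemicontinuous g ∧ ConvexEpi g ∧ (∀ r, g r ≤ prePersp φ s r) ∧ t = g q}

/-- The point `(x, y)` in the Hilbert direct sum `H ⊕ G`. -/
def pairHG {H G : Type*} (x : H) (y : G) : WithLp 2 (H × G) :=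
  (WithLp.equiv 2 (H × G)).symm (x, y)

end
noncomputable section

/-- `Ξ₁` of Proposition 4.3. -/
def Xi1 {H G : Type*} [NormedAddCommGroup H] [InnerProductSpace ℝ H]
    [NormedAddCommGroup G] [InnerProductSpace ℝ G]
    (φ : H → EReal) (s : G → EReal) (γ : ℝ) : Set (H × G) :=
  {p | hautEnv s (projC (closure (convexHull ℝ (sdom s))) p.2) = 0 ∧
       fconj φ (projC (closure (edom (fconj φ))) (γ⁻¹ • p.1)) = 0}

/-- `Ξ₂` of Proposition 4.3. -/
def Xi2 {H G : Type*} [NormedAddCommGroup H] [InnerProductSpace ℝ H]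
    [NormedAddCommGroup G] [InnerProductSpace ℝ G]
    (φ : H → EReal) (s : G → EReal) (γ : ℝ) : Set (H × G) :=
  {p | (0 < hautEnv s (projC (closure (convexHull ℝ (sdom s))) p.2) ∧
        hautEnv s (projC (closure (convexHull ℝ (sdom s))) p.2) < ⊤) ∧
       fconj φ (prox (smulE (γ⁻¹ * (hautEnv s (projC (closure (convexHull ℝ (sdom s))) p.2)).toReal)
          (fconj φ)) (γ⁻¹ • p.1)) = 0}

/-- `Ξ₃` of Proposition 4.3. -/
def Xi3 {H G : Type*} [NormedAddCommGroup H] [InnerProductSpace ℝ H]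
    [NormedAddCommGroup G] [InnerProductSpace ℝ G]
    (φ : H → EReal) (s : G → EReal) (γ : ℝ) : Set (H × G) :=
  {p | hautEnv s (prox (smulE (γ * (-(fconj φ (projC (closure (edom (fconj φ))) (γ⁻¹ • p.1)))).toReal)
          (hautEnv s)) p.2) = 0 ∧
       fconj φ (projC (closure (edom (fconj φ))) (γ⁻¹ • p.1)) < 0}

/-- The equation (4.4) for `η` in Theorem 4.1(iii). -/
def eta9eq {H G : Type*} [NormedAddCommGroup H] [InnerProductSpace ℝ H]
    [NormedAddCommGroup G] [InnerProductSpace ℝ G]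
    (φ : H → EReal) (s : G → EReal) (γ : ℝ) (x : H) (y : G) (η : ℝ) : Prop :=
  fconj φ (prox (rscale (γ⁻¹ * (hautEnv s (prox (rscale (γ * η) (hautEnv s)) y)).toReal)
      (fconj φ)) (γ⁻¹ • x)) + (η : EReal) = 0

end

noncomputable section
def epiR {E : Type*} (f : E → EReal) : Set (E × ℝ) := {p : E × ℝ | f p.1 ≤ (p.2 : EReal)}

theorem epiR_closed_of_lsc {E : Type*} [TopologicalSpace E] {f : E → EReal}
    (hf : LowerSemicontinuous f) : IsClosed (epiR f) := by
  have h := hf.isClosed_epigraph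
  exact h.preimage (f := fun p : E × ℝ => (p.1, (p.2 : EReal)))
    (continuous_fst.prodMk (continuous_coe_real_ereal.comp continuous_snd))

theorem mul_le_coe_iff {ξ : ℝ} (hξ : 0 < ξ) (a : EReal) (r : ℝ) :
    (ξ : EReal) * a ≤ (r : EReal) ↔ a ≤ ((ξ⁻¹ * r : ℝ) : EReal) := by
  induction a with
  | bot => simp [EReal.coe_mul_bot_of_pos hξ]
  | top =>
    rw [EReal.coe_mul_top_of_pos hξ, top_le_iff, top_le_iff]
    exact iff_of_false (EReal.coe_ne_top _) (EReal.coe_ne_top _)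
  | coe a =>
    rw [← EReal.coe_mul, EReal.coe_le_coe_iff, EReal.coe_le_coe_iff, inv_mul_eq_div, le_div_iff₀ hξ,
      mul_comm]

theorem epiR_smulE {E : Type*} {ξ : ℝ} (hξ : 0 < ξ) (f : E → EReal) :
    epiR (smulE ξ f) = (fun p : E × ℝ => (p.1, ξ⁻¹ * p.2)) ⁻¹' epiR f := by
  ext p
  exact mul_le_coe_iff hξ _ _

theorem epiR_smulE_closed {E : Type*} [TopologicalSpace E] {ξ : ℝ} (hξ : 0 < ξ) {f : E → EReal}
    (h : IsClosed (epiR f)) : IsClosed (epiR (smulE ξ f)) := by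
  rw [epiR_smulE hξ]
  exact h.preimage (by fun_prop)

theorem epiR_smulE_convex {E : Type*} [AddCommGroup E] [Module ℝ E] {ξ : ℝ} (hξ : 0 < ξ)
    {f : E → EReal} (h : Convex ℝ (epiR f)) : Convex ℝ (epiR (smulE ξ f)) := by
  rw [epiR_smulE hξ]
  intro p hp q hq a b ha hb hab
  have := h hp hq ha hb hab
  simp only [Set.mem_preimage] at *
  convert this using 1
  ext <;> simp; ring

section
variable {E : Type*} [NormedAddCommGroup E] [InnerProductSpace ℝ E]

theorem sub_le_coe_iff (a : ℝ) (b : EReal) (r : ℝ) :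
    (a : EReal) - b ≤ (r : EReal) ↔ ((a - r : ℝ) : EReal) ≤ b := by
  induction b with
  | bot =>
    rw [EReal.coe_sub_bot, top_le_iff, le_bot_iff]
    exact iff_of_false (EReal.coe_ne_top _) (EReal.coe_ne_bot _)
  | top => simp
  | coe b =>
    rw [← EReal.coe_sub, EReal.coe_le_coe_iff, EReal.coe_le_coe_iff]
    constructor <;> intro h <;> linarith

theorem fconj_le_iff (f : E → EReal) (y : E) (r : ℝ) :
    fconj f y ≤ (r : EReal) ↔ ∀ x, ((inner ℝ x y - r : ℝ) : EReal) ≤ f x := by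
  unfold fconj
  rw [iSup_le_iff]
  exact forall_congr' fun x => sub_le_coe_iff _ _ _

theorem epiR_fconj (f : E → EReal) :
    epiR (fconj f) = ⋂ x, {p : E × ℝ | ((inner ℝ x p.1 - p.2 : ℝ) : EReal) ≤ f x} := by
  ext p
  simp only [Set.mem_iInter]
  exact fconj_le_iff f p.1 p.2

theorem epiR_fconj_closed (f : E → EReal) : IsClosed (epiR (fconj f)) := by
  rw [epiR_fconj]
  refine isClosed_iInter fun x => ?_
  exact isClosed_le (continuous_coe_real_ereal.comp (by fun_prop)) continuous_const

theorem epiR_fconj_convex (f : E → EReal) : Convex ℝ (epiR (fconj f)) := by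
  rw [epiR_fconj]
  refine convex_iInter fun x => ?_
  intro p hp q hq a b ha hb hab
  simp only [Set.mem_ofPred_eq] at *
  generalize f x = c at *
  induction c with
  | bot => exact absurd (le_bot_iff.1 hp) (EReal.coe_ne_bot _)
  | top => simp
  | coe c =>
    rw [EReal.coe_le_coe_iff] at *
    simp only [Prod.fst_add, Prod.smul_fst, Prod.snd_add, Prod.smul_snd, inner_add_right,
      inner_smul_right, smul_eq_mul]
    have : a * (inner ℝ x p.1 - p.2) + b * (inner ℝ x q.1 - q.2) ≤ a * c + b * c := by gcongr
    rw [← add_mul, hab] at this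
    linarith

theorem bic_le (f : E → EReal) (x : E) : fconj (fconj f) x ≤ f x := by
  by_contra h
  push Not at h
  obtain ⟨r, h1, h2⟩ := EReal.lt_iff_exists_real_btwn.1 h
  refine absurd h2 (not_lt.2 ?_)
  rw [fconj_le_iff]
  intro y
  by_contra h3
  push Not at h3
  obtain ⟨t, h4, h5⟩ := EReal.lt_iff_exists_real_btwn.1 h3
  have h6 := (fconj_le_iff f y t).1 h4.le x
  have h7 := h6.trans_lt h1
  rw [EReal.coe_lt_coe_iff] at h5 h7
  rw [real_inner_comm] at h7
  linarith

theorem le_bic (f : E → EReal) (a : E) (m : ℝ)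
    (h : ∀ x, ((inner ℝ x a - m : ℝ) : EReal) ≤ f x) (p : E) :
    ((inner ℝ p a - m : ℝ) : EReal) ≤ fconj (fconj f) p := by
  have h1 := (fconj_le_iff f a m).2 h
  by_contra h3
  push Not at h3
  obtain ⟨t, h4, h5⟩ := EReal.lt_iff_exists_real_btwn.1 h3
  have h6 := ((fconj_le_iff (fconj f) p t).1 h4.le a).trans h1
  rw [EReal.coe_lt_coe_iff] at h5
  rw [EReal.coe_le_coe_iff] at h6
  rw [real_inner_comm] at h6
  linarith

theorem var_ineq {K : Set (E × ℝ)} (hK : Convex ℝ K) {x p : E} {ρ : ℝ} (hp : (p, ρ) ∈ K)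
    (hmin : ∀ q ∈ K, ρ + ‖x - p‖ ^ 2 / 2 ≤ q.2 + ‖x - q.1‖ ^ 2 / 2) (q : E × ℝ) (hq : q ∈ K) :
    ρ + inner ℝ (x - p) (q.1 - p) ≤ q.2 := by
  by_contra hcon
  push Not at hcon
  set d := ρ + inner ℝ (x - p) (q.1 - p) - q.2 with hd
  have hd0 : 0 < d := by linarith
  set N := ‖q.1 - p‖ ^ 2 with hN
  have hN0 : 0 ≤ N := by positivity
  have key : ∀ l : ℝ, 0 < l → l ≤ 1 → d ≤ l * N / 2 := by
    intro l hl hl1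
    have hm := hmin _ (hK hp hq (sub_nonneg.2 hl1) hl.le (by ring))
    simp only [Prod.fst_add, Prod.smul_fst, Prod.snd_add, Prod.smul_snd, smul_eq_mul] at hm
    have e : x - ((1 - l) • p + l • q.1) = (x - p) - l • (q.1 - p) := by module
    rw [e, norm_sub_sq_real (x - p), inner_smul_right, norm_smul, mul_pow, Real.norm_eq_abs, sq_abs] at hm
    have : l * d ≤ l * (l * N / 2) := by rw [hd, hN]; nlinarith
    exact le_of_mul_le_mul_left this hl
  have h1 := key (min 1 (d / (N + 1))) (by positivity) (min_le_left _ _)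
  have h2 : min 1 (d / (N + 1)) ≤ d / (N + 1) := min_le_right _ _
  have h3 : d / (N + 1) * N ≤ d := by
    rw [div_mul_eq_mul_div, div_le_iff₀ (by positivity)]; nlinarith
  nlinarith

theorem exists_min [CompleteSpace E] {K : Set (E × ℝ)} (hK : Convex ℝ K) (hcl : IsClosed K)
    (hne : K.Nonempty) (x : E) (m : ℝ) (hm : ∀ q ∈ K, m ≤ q.2 + ‖x - q.1‖ ^ 2 / 2) :
    ∃ p ρ, (p, ρ) ∈ K ∧ ∀ q ∈ K, ρ + ‖x - p‖ ^ 2 / 2 ≤ q.2 + ‖x - q.1‖ ^ 2 / 2 := by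
  set F : E × ℝ → ℝ := fun q => q.2 + ‖x - q.1‖ ^ 2 / 2 with hF
  set μ := sInf (F '' K) with hμ
  have hbd : BddBelow (F '' K) := ⟨m, by rintro _ ⟨q, hq, rfl⟩; exact hm q hq⟩
  have hle : ∀ q ∈ K, μ ≤ F q := fun q hq => csInf_le hbd ⟨q, hq, rfl⟩
  have hex : ∀ n : ℕ, ∃ q ∈ K, F q < μ + 1 / ((n : ℝ) + 1) := by
    intro n
    obtain ⟨_, ⟨q, hq, rfl⟩, h⟩ := exists_lt_of_csInf_lt (hne.image F)
      (show sInf (F '' K) < μ + 1 / ((n : ℝ) + 1) by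
        have : (0:ℝ) < 1 / ((n : ℝ) + 1) := by positivity
        linarith)
    exact ⟨q, hq, h⟩
  choose u hu hlt using hex
  have hdist : ∀ a ∈ K, ∀ b ∈ K, ‖a.1 - b.1‖ ^ 2 ≤ 4 * (F a + F b - 2 * μ) := by
    intro a ha b hb
    have h := hle _ (hK ha hb (by norm_num : (0:ℝ) ≤ 1/2) (by norm_num : (0:ℝ) ≤ 1/2) (by norm_num))
    simp only [hF, Prod.fst_add, Prod.smul_fst, Prod.snd_add, Prod.smul_snd, smul_eq_mul] at h ⊢
    have e : x - ((1/2:ℝ) • a.1 + (1/2:ℝ) • b.1) = (1/2:ℝ) • ((x - a.1) + (x - b.1)) := by module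
    have e2 : a.1 - b.1 = (x - b.1) - (x - a.1) := by abel
    rw [e, norm_smul, mul_pow, norm_add_sq_real] at h
    rw [e2, norm_sub_sq_real, real_inner_comm]
    norm_num at h
    nlinarith
  have hanti : ∀ n N : ℕ, N ≤ n → F (u n) ≤ μ + 1 / ((N : ℝ) + 1) := by
    intro n N h
    refine (hlt n).le.trans ?_
    gcongr
  have hcau : CauchySeq fun n => (u n).1 := by
    refine cauchySeq_of_le_tendsto_0 (fun N : ℕ => Real.sqrt (8 * (1 / ((N : ℝ) + 1)))) ?_ ?_
    · intro n k N hn hk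
      rw [dist_eq_norm]
      apply Real.le_sqrt_of_sq_le
      have := hdist _ (hu n) _ (hu k)
      linarith [hanti n N hn, hanti k N hk]
    · have h0 := (tendsto_one_div_add_atTop_nhds_zero_nat (𝕜 := ℝ)).const_mul 8
      have := (Real.continuous_sqrt.tendsto _).comp h0
      rw [mul_zero, Real.sqrt_zero] at this
      exact this
  obtain ⟨p, hp⟩ := cauchySeq_tendsto_of_complete hcau
  have hr : Filter.Tendsto (fun n => (u n).2) Filter.atTop (nhds (μ - ‖x - p‖ ^ 2 / 2)) := by
    have hFt : Filter.Tendsto (fun n => F (u n)) Filter.atTop (nhds μ) := by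
      refine tendsto_of_tendsto_of_tendsto_of_le_of_le tendsto_const_nhds
        (h := fun n : ℕ => μ + 1 / ((n : ℝ) + 1)) ?_ (fun n => hle _ (hu n)) (fun n => (hlt n).le)
      simpa using (tendsto_one_div_add_atTop_nhds_zero_nat (𝕜 := ℝ)).const_add μ
    have hq : Filter.Tendsto (fun n => ‖x - (u n).1‖ ^ 2 / 2) Filter.atTop
        (nhds (‖x - p‖ ^ 2 / 2)) := (((tendsto_const_nhds.sub hp).norm).pow 2).div_const 2
    refine (hFt.sub hq).congr fun n => ?_
    simp [hF]
  refine ⟨p, μ - ‖x - p‖ ^ 2 / 2, ?_, ?_⟩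
  · exact hcl.mem_of_tendsto (hp.prodMk_nhds hr) (Filter.Eventually.of_forall fun n => hu n)
  · intro q hq
    have := hle q hq
    simp only [hF] at this
    linarith

theorem prox_spec [CompleteSpace E] {f : E → EReal} (hK : Convex ℝ (epiR f))
    (hcl : IsClosed (epiR f))
    (hne : (epiR f).Nonempty) (x : E) (m : ℝ) (hm : ∀ q ∈ epiR f, m ≤ q.2 + ‖x - q.1‖ ^ 2 / 2) :
    ∃ ρ : ℝ, f (prox f x) = ρ ∧
      ∀ q ∈ epiR f, ρ + ‖x - prox f x‖ ^ 2 / 2 ≤ q.2 + ‖x - q.1‖ ^ 2 / 2 := by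
  obtain ⟨p, ρ, hp, hmin⟩ := exists_min hK hcl hne x m hm
  have hbot : ∀ y, f y ≠ ⊥ := by
    intro y hy
    have := hm (y, m - ‖x - y‖ ^ 2 / 2 - 1) (by simp [epiR, hy])
    simp only at this
    linarith
  have hspec : ∀ y, f (prox f x) + ((‖x - prox f x‖ ^ 2 / 2 : ℝ) : EReal)
      ≤ f y + ((‖x - y‖ ^ 2 / 2 : ℝ) : EReal) := by
    apply Classical.epsilon_spec (p := fun p => ∀ y, f p + ((‖x - p‖ ^ 2 / 2 : ℝ) : EReal)
      ≤ f y + ((‖x - y‖ ^ 2 / 2 : ℝ) : EReal))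
    refine ⟨p, fun y => ?_⟩
    have hp' : f p ≤ (ρ : EReal) := hp
    refine (add_le_add_left hp' _).trans ?_
    have hb := hbot y
    have hq := fun r => hmin (y, r)
    simp only [epiR, Set.mem_ofPred_eq] at hq
    generalize f y = c at *
    induction c with
    | bot => exact absurd rfl hb
    | top => simp
    | coe c => exact_mod_cast hq c le_rfl
  generalize prox f x = P at *
  have hb := hbot P
  obtain ⟨q0, hq0⟩ := hne
  have h0 : f q0.1 ≤ (q0.2 : EReal) := hq0
  have h1 := (hspec q0.1).trans (add_le_add_left h0 _)
  generalize f P = c at *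
  induction c with
  | bot => exact absurd rfl hb
  | top =>
    rw [EReal.top_add_coe, ← EReal.coe_add, top_le_iff] at h1
    exact absurd h1 (EReal.coe_ne_top _)
  | coe c =>
    refine ⟨c, rfl, fun q hq => ?_⟩
    have h2 : f q.1 ≤ (q.2 : EReal) := hq
    have h3 := (hspec q.1).trans (add_le_add_left h2 _)
    exact_mod_cast h3

theorem projC_spec [CompleteSpace E] {C : Set E} (hC : Convex ℝ C) (hcl : IsClosed C)
    (hne : C.Nonempty) (x : E) :
    projC C x ∈ C ∧ ∀ y ∈ C, ‖x - projC C x‖ ≤ ‖x - y‖ := by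
  apply Classical.epsilon_spec (p := fun p => p ∈ C ∧ ∀ y ∈ C, ‖x - p‖ ≤ ‖x - y‖)
  obtain ⟨p, ρ, hp, hmin⟩ := exists_min (K := C ×ˢ Set.Ici (0:ℝ)) (hC.prod (convex_Ici 0))
    (hcl.prod isClosed_Ici) (hne.prod ⟨0, by simp⟩) x 0 (by
      rintro q ⟨_, hq⟩
      have : (0:ℝ) ≤ q.2 := hq
      positivity)
  refine ⟨p, hp.1, fun y hy => ?_⟩
  have h := hmin (y, 0) ⟨hy, by simp⟩
  have h0 : (0:ℝ) ≤ ρ := hp.2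
  simp only at h
  exact (sq_le_sq₀ (norm_nonneg _) (norm_nonneg _)).1 (by linarith)

theorem projC_var [CompleteSpace E] {C : Set E} (hC : Convex ℝ C) (hcl : IsClosed C)
    (hne : C.Nonempty) (x : E) (v : E) (hv : v ∈ C) :
    inner ℝ (x - projC C x) (v - projC C x) ≤ 0 := by
  obtain ⟨h1, h2⟩ := projC_spec hC hcl hne x
  have := var_ineq (K := C ×ˢ Set.Ici (0:ℝ)) (x := x) (p := projC C x) (ρ := 0)
    (hC.prod (convex_Ici 0))
    ⟨h1, by simp⟩ (by
      rintro q ⟨hq1, hq2⟩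
      have h3 : (0:ℝ) ≤ q.2 := hq2
      have := h2 q.1 hq1
      gcongr) (v, 0) ⟨hv, by simp⟩
  simpa using this

theorem prox_rscale_zero {f : E → EReal} (hne : (edom f).Nonempty) (x : E) :
    prox (rscale 0 f) x = projC (closure (edom f)) x := by
  obtain ⟨c, hc⟩ := hne
  have hc' := subset_closure hc
  unfold prox projC rscale
  congr 1
  funext p
  simp only [if_true]
  apply propext
  constructor
  · intro h
    have hp : p ∈ closure (edom f) := by
      by_contra hp
      have := h c
      rw [if_neg hp, if_pos hc', EReal.top_add_coe, top_le_iff, zero_add] at this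
      exact EReal.coe_ne_top _ this
    refine ⟨hp, fun y hy => ?_⟩
    have := h y
    rw [if_pos hp, if_pos hy, zero_add, zero_add, EReal.coe_le_coe_iff] at this
    exact (sq_le_sq₀ (norm_nonneg _) (norm_nonneg _)).1 (by linarith)
  · rintro ⟨hp, h⟩ y
    rw [if_pos hp]
    by_cases hy : y ∈ closure (edom f)
    · rw [if_pos hy, zero_add, zero_add, EReal.coe_le_coe_iff]
      have := h y hy
      gcongr
    · rw [if_neg hy]; simp

theorem edom_convex {f : E → EReal} (h : Convex ℝ (epiR f)) :
    Convex ℝ (edom f) := by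
  have : edom f = Prod.fst '' epiR f := by
    ext x
    constructor
    · intro hx
      exact ⟨(x, (f x).toReal), EReal.le_coe_toReal (ne_of_lt hx), rfl⟩
    · rintro ⟨q, hq, rfl⟩
      exact lt_of_le_of_lt hq (EReal.coe_lt_top _)
  rw [this]
  exact h.linear_image (LinearMap.fst ℝ E ℝ)

theorem sep_point [CompleteSpace E] {C : Set E} (hC : Convex ℝ C) (hcl : IsClosed C) {p : E}
    (hp : p ∉ C) : ∃ a : E, ∃ m : ℝ, (∀ v ∈ C, inner ℝ v a < m) ∧ m < inner ℝ p a := by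
  obtain ⟨l, m, h1, h2⟩ := geometric_hahn_banach_closed_point hC hcl hp
  refine ⟨(InnerProductSpace.toDual ℝ E).symm l, m, fun v hv => ?_, ?_⟩
  · rw [real_inner_comm, InnerProductSpace.toDual_symm_apply]; exact h1 v hv
  · rw [real_inner_comm, InnerProductSpace.toDual_symm_apply]; exact h2

theorem sep_prod [CompleteSpace E] {K : Set (E × ℝ)} (hC : Convex ℝ K) (hcl : IsClosed K)
    {p : E × ℝ} (hp : p ∉ K) : ∃ a : E, ∃ b m : ℝ,
      (∀ v ∈ K, inner ℝ v.1 a + b * v.2 < m) ∧ m < inner ℝ p.1 a + b * p.2 := by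
  obtain ⟨l, m, h1, h2⟩ := geometric_hahn_banach_closed_point hC hcl hp
  have hl : ∀ v : E × ℝ, inner ℝ v.1 ((InnerProductSpace.toDual ℝ E).symm
      (l.comp (ContinuousLinearMap.inl ℝ E ℝ))) + l (0, 1) * v.2 = l v := by
    intro v
    rw [real_inner_comm, InnerProductSpace.toDual_symm_apply]
    have : v = (v.1, 0) + v.2 • ((0:E), (1:ℝ)) := by ext <;> simp
    conv_rhs => rw [this, map_add, map_smul]
    simp [mul_comm]
  refine ⟨(InnerProductSpace.toDual ℝ E).symm
      (l.comp (ContinuousLinearMap.inl ℝ E ℝ)), l (0, 1), m, fun v hv => ?_, ?_⟩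
  · rw [hl]; exact h1 v hv
  · rw [hl]; exact h2
end
end

noncomputable section
section
variable {G : Type*} [NormedAddCommGroup G] [InnerProductSpace ℝ G]

theorem haut_ge (s : G → EReal) (a : G) (m : ℝ)
    (h : ∀ v ∈ sdom s, ((inner ℝ v a - m : ℝ) : EReal) ≤ s v) (p : G) :
    ((inner ℝ p a - m : ℝ) : EReal) ≤ hautEnv s p := by
  apply le_bic
  intro v
  unfold phaut
  split_ifs with hv
  · exact h v hv
  · exact le_top

theorem haut_nonneg (s : G → EReal) (p : G) : 0 ≤ hautEnv s p := by
  have := haut_ge s 0 0 (fun v hv => by simpa using hv.1.le) p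
  simpa using this

theorem haut_le (s : G → EReal) {v : G} (hv : v ∈ sdom s) : hautEnv s v ≤ s v := by
  have := bic_le (phaut s) v
  unfold phaut at this
  rwa [if_pos (show 0 < s v ∧ s v < ⊤ from hv)] at this

theorem haut_closure [CompleteSpace G] (s : G → EReal) :
    closure (edom (hautEnv s)) = closure (convexHull ℝ (sdom s)) := by
  apply Set.Subset.antisymm
  · refine closure_minimal ?_ isClosed_closure
    intro p hp
    by_contra hpC
    obtain ⟨a, m, h1, h2⟩ := sep_point (convex_convexHull ℝ (sdom s)).closure isClosed_closure hpC
    have hp' : hautEnv s p < ⊤ := hp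
    have h3 := haut_nonneg s p
    have key : ∀ k : ℝ, 0 ≤ k → ((k * (inner ℝ p a - m) : ℝ) : EReal) ≤ hautEnv s p := by
      intro k hk
      have := haut_ge s (k • a) (k * m) (fun v hv => by
        refine le_trans ?_ hv.1.le
        rw [inner_smul_right, ← mul_sub, ← EReal.coe_zero, EReal.coe_le_coe_iff]
        have := h1 v (subset_closure (subset_convexHull ℝ _ hv))
        nlinarith) p
      rwa [inner_smul_right, ← mul_sub] at this
    generalize hautEnv s p = c at *
    induction c with
    | bot => simp at h3
    | top => simp at hp'
    | coe c =>
      have hc : 0 ≤ c := by exact_mod_cast h3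
      have hd : 0 < inner ℝ p a - m := by linarith
      have := key ((c + 1) / (inner ℝ p a - m)) (by positivity)
      rw [div_mul_cancel₀ _ hd.ne', EReal.coe_le_coe_iff] at this
      linarith
  · refine closure_mono (convexHull_min ?_ (edom_convex (epiR_fconj_convex _)))
    intro v hv
    exact lt_of_le_of_lt (haut_le s hv) hv.2

theorem haut_key [CompleteSpace G] (s : G → EReal) {A : Set (G × ℝ)} (hA : Convex ℝ A)
    (hcl : IsClosed A) (hg : ∀ v ∈ sdom s, (v, (s v).toReal) ∈ A) {p : G} {τ : ℝ}
    (hp : p ∈ closure (convexHull ℝ (sdom s))) (hτ : hautEnv s p = τ) : (p, τ) ∈ A := by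
  by_contra hcon
  obtain ⟨a, b, m, h1, h2⟩ := sep_prod hA hcl hcon
  simp only at h2
  have hs : ∀ v ∈ sdom s, s v = ((s v).toReal : EReal) := fun v hv =>
    (EReal.coe_toReal hv.2.ne (ne_bot_of_gt hv.1)).symm
  rcases lt_or_ge b 0 with hb | hb
  · have := haut_ge s ((-b)⁻¹ • a) ((-b)⁻¹ * m) (fun v hv => by
      rw [hs v hv, inner_smul_right, ← mul_sub, EReal.coe_le_coe_iff, inv_mul_le_iff₀ (by linarith)]
      have := h1 _ (hg v hv)
      simp only at this
      linarith) p
    rw [hτ, inner_smul_right, ← mul_sub, EReal.coe_le_coe_iff, inv_mul_le_iff₀ (by linarith)] at this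
    linarith
  · set B : Set G := {v |
      (b = 0 → inner ℝ v a ≤ m) ∧ (b ≠ 0 → (v, b⁻¹ * (m - inner ℝ v a)) ∈ epiR (hautEnv s))} with hB
    have hBcl : IsClosed B ∧ Convex ℝ B := by
      by_cases hb0 : b = 0
      · have : B = {v | inner ℝ v a ≤ m} := by ext v; simp [hB, hb0]
        rw [this]
        refine ⟨isClosed_le (by fun_prop) continuous_const, ?_⟩
        intro v hv w hw α β hα hβ hαβ
        simp only [Set.mem_ofPred_eq, inner_add_left, inner_smul_left] at *
        have : α * inner ℝ v a + β * inner ℝ w a ≤ α * m + β * m := by gcongr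
        rw [← add_mul, hαβ] at this
        simpa using this
      · have : B = (fun v => (v, b⁻¹ * (m - inner ℝ v a))) ⁻¹' epiR (hautEnv s) := by
          ext v; simp [hB, hb0]
        rw [this]
        refine ⟨(epiR_fconj_closed _).preimage (by fun_prop), ?_⟩
        intro v hv w hw α β hα hβ hαβ
        have := epiR_fconj_convex _ hv hw hα hβ hαβ
        have e : (α • v + β • w, b⁻¹ * (m - inner ℝ (α • v + β • w) a)) =
            α • (v, b⁻¹ * (m - inner ℝ v a)) + β • (w, b⁻¹ * (m - inner ℝ w a)) := by
          rw [Prod.smul_mk, Prod.smul_mk, Prod.mk_add_mk, Prod.mk.injEq]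
          refine ⟨rfl, ?_⟩
          have hβ' : β = 1 - α := by linarith
          simp only [inner_add_left, inner_smul_left, smul_eq_mul, conj_trivial]
          rw [hβ']
          ring
        rw [Set.mem_preimage, e]
        exact this
    have hsub : closure (convexHull ℝ (sdom s)) ⊆ B := by
      refine closure_minimal (convexHull_min ?_ hBcl.2) hBcl.1
      intro v hv
      have hv1 := h1 _ (hg v hv)
      simp only at hv1
      refine ⟨fun hb0 => ?_, fun hb0 => ?_⟩
      · rw [hb0] at hv1; linarith
      · have hb1 : 0 < b := lt_of_le_of_ne hb (Ne.symm hb0)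
        refine (haut_le s hv).trans ?_
        rw [hs v hv, EReal.coe_le_coe_iff]
        rw [le_inv_mul_iff₀ hb1]
        linarith
    obtain ⟨hp1, hp2⟩ := hsub hp
    by_cases hb0 : b = 0
    · have := hp1 hb0
      rw [hb0] at h2
      linarith
    · have hb1 : 0 < b := lt_of_le_of_ne hb (Ne.symm hb0)
      have h3 : hautEnv s p ≤ _ := hp2 hb0
      rw [hτ, EReal.coe_le_coe_iff, le_inv_mul_iff₀ hb1] at h3
      linarith

theorem fm_le [CompleteSpace G] {φ : G → EReal} (hφ : IsGamma0 φ) {q z : G}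
    (hq : fconj φ q ≤ 0)
    (hz : ∀ (u : G) (r : ℝ), fconj φ u ≤ (r : EReal) → inner ℝ z (u - q) ≤ r) :
    φ z ≤ ((inner ℝ z q : ℝ) : EReal) := by
  obtain ⟨⟨v0, hv0⟩, hbot, hlsc, hcv⟩ := hφ
  by_contra hcon
  have hnot : (z, inner ℝ z q) ∉ epiR φ := hcon
  obtain ⟨a, b, m, h1, h2⟩ := sep_prod hcv (epiR_closed_of_lsc hlsc) hnot
  simp only at h2
  have hb : b ≤ 0 := by
    by_contra hb
    push Not at hb
    set r0 := (φ v0).toReal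
    have h3 := h1 (v0, max r0 ((m - inner ℝ v0 a) / b)) (by
      show φ v0 ≤ _
      refine (EReal.le_coe_toReal hv0).trans ?_
      exact EReal.coe_le_coe_iff.2 (le_max_left _ _))
    simp only at h3
    have h4 : (m - inner ℝ v0 a) / b ≤ max r0 ((m - inner ℝ v0 a) / b) := le_max_right _ _
    rw [div_le_iff₀ hb] at h4
    linarith
  rcases hb.lt_or_eq with hb | hb
  · have h3 : fconj φ ((-b)⁻¹ • a) ≤ (((-b)⁻¹ * m : ℝ) : EReal) := by
      rw [fconj_le_iff]
      intro v
      have hv := hbot v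
      have hk := fun r => h1 (v, r)
      simp only [Set.mem_ofPred_eq] at hk
      generalize φ v = c at *
      induction c with
      | bot => exact absurd rfl hv
      | top => simp
      | coe c =>
        rw [EReal.coe_le_coe_iff, inner_smul_right, ← mul_sub, inv_mul_le_iff₀ (by linarith)]
        have := hk c le_rfl
        linarith
    have h4 := hz _ _ h3
    rw [inner_sub_right, inner_smul_right, sub_le_iff_le_add, inv_mul_le_iff₀ (by linarith),
      mul_add, mul_inv_cancel_left₀ (by linarith)] at h4
    linarith
  · subst hb
    have h3 : fconj φ (q + a) ≤ ((m : ℝ) : EReal) := by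
      rw [fconj_le_iff]
      intro v
      have hq' : fconj φ q ≤ ((0 : ℝ) : EReal) := by simpa using hq
      have hq1 := (fconj_le_iff φ q 0).1 hq' v
      have hv := hbot v
      have hk := fun r => h1 (v, r)
      simp only [Set.mem_ofPred_eq] at hk
      generalize φ v = c at *
      induction c with
      | bot => exact absurd rfl hv
      | top => simp
      | coe c =>
        rw [EReal.coe_le_coe_iff] at *
        rw [inner_add_right]
        have := hk c le_rfl
        linarith
    have h4 := hz _ _ h3
    rw [add_sub_cancel_left] at h4
    linarith

end

section
variable {H G : Type*} [NormedAddCommGroup H] [InnerProductSpace ℝ H]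
    [NormedAddCommGroup G] [InnerProductSpace ℝ G]

theorem persp_le [CompleteSpace G] (φ : H → EReal) (s : G → EReal) {z : H} {c : ℝ}
    (hz : φ z ≤ (c : EReal)) {p : G} {τ : ℝ}
    (hp : p ∈ closure (convexHull ℝ (sdom s))) (hτ : hautEnv s p = τ) :
    persp φ s (pairHG (τ • z) p) ≤ ((τ * c : ℝ) : EReal) := by
  refine sSup_le ?_
  rintro t ⟨g, hl, hc, hle, rfl⟩
  set T : G × ℝ →ₗ[ℝ] (WithLp 2 (H × G)) × ℝ :=
    { toFun := fun v => (pairHG (v.2 • z) v.1, v.2 * c)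
      map_add' := by
        intro v w
        refine Prod.ext ?_ (add_mul _ _ _)
        apply (WithLp.equiv 2 (H × G)).injective
        exact Prod.ext (add_smul _ _ _) rfl
      map_smul' := by
        intro k w
        refine Prod.ext ?_ (mul_assoc _ _ _)
        apply (WithLp.equiv 2 (H × G)).injective
        exact Prod.ext (mul_smul _ _ _) rfl } with hT
  have hTc : Continuous T := by
    refine Continuous.prodMk ?_ (by fun_prop)
    refine (WithLp.prod_continuous_toLp 2 H G).comp ?_
    fun_prop
  have hmem := haut_key s (A := T ⁻¹' epiR g) (hc.linear_preimage T)
    ((epiR_closed_of_lsc hl).preimage hTc) (fun v hv => by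
      have hv' : 0 < s v ∧ s v < ⊤ := hv
      refine (hle _).trans ?_
      have hs : s v = ((s v).toReal : EReal) := (EReal.coe_toReal hv.2.ne (ne_bot_of_gt hv.1)).symm
      have hpos : 0 < (s v).toReal := by
        have := hv.1
        rw [hs] at this
        exact_mod_cast this
      have e : prePersp φ s (pairHG ((s v).toReal • z) v) = s v * φ z := by
        unfold prePersp pairHG
        simp only [Equiv.apply_symm_apply]
        rw [if_pos hv', inv_smul_smul₀ hpos.ne']
      show prePersp φ s (pairHG ((s v).toReal • z) v) ≤ (((s v).toReal * c : ℝ) : EReal)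
      rw [e, hs, EReal.coe_mul]
      simp only [EReal.toReal_coe]
      exact mul_le_mul_of_nonneg_left hz (by exact_mod_cast hpos.le)) hp hτ
  exact hmem

theorem le_persp (φ : H → EReal) (s : G → EReal) (q : H) (hq : fconj φ q ≤ 0) (b : G) (m : ℝ)
    (hb : ∀ v ∈ sdom s, inner ℝ b v ≤ m) (Q : WithLp 2 (H × G)) :
    ((inner ℝ q Q.fst + inner ℝ b Q.snd - m : ℝ) : EReal) ≤ persp φ s Q := by
  apply le_sSup
  refine ⟨fun Q => ((inner ℝ q Q.fst + inner ℝ b Q.snd - m : ℝ) : EReal), ?_, ?_, ?_, rfl⟩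
  · apply Continuous.lowerSemicontinuous
    exact continuous_coe_real_ereal.comp (by fun_prop)
  · intro v hv w hw α β hα hβ hαβ
    simp only [Set.mem_ofPred_eq, EReal.coe_le_coe_iff] at *
    simp only [Prod.fst_add, Prod.smul_fst, Prod.snd_add, Prod.smul_snd, WithLp.add_fst,
      WithLp.smul_fst, WithLp.add_snd, WithLp.smul_snd, inner_add_right, inner_smul_right,
      smul_eq_mul]
    have hm : α * m + β * m = m := by rw [← add_mul, hαβ, one_mul]
    linarith [mul_le_mul_of_nonneg_left hv hα, mul_le_mul_of_nonneg_left hw hβ]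
  · intro r
    unfold prePersp
    split_ifs with h
    · have hv := h
      change 0 < s r.snd ∧ s r.snd < ⊤ at hv
      change _ ≤ s r.snd * φ ((s r.snd).toReal⁻¹ • r.fst)
      have hs : s r.snd = ((s r.snd).toReal : EReal) :=
        (EReal.coe_toReal hv.2.ne (ne_bot_of_gt hv.1)).symm
      have hpos : 0 < (s r.snd).toReal := by
        have := hv.1
        rw [hs] at this
        exact_mod_cast this
      have hq' : fconj φ q ≤ ((0 : ℝ) : EReal) := by simpa using hq
      have h1 := (fconj_le_iff φ q 0).1 hq' ((s r.snd).toReal⁻¹ • r.fst)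
      have hpos' : (0 : EReal) ≤ ((s r.snd).toReal : EReal) := by exact_mod_cast hpos.le
      have h2 := mul_le_mul_of_nonneg_left h1 hpos'
      rw [← EReal.coe_mul, ← hs] at h2
      refine le_trans ?_ h2
      rw [EReal.coe_le_coe_iff, inner_smul_left]
      have h3 := hb _ hv
      rw [real_inner_comm r.fst q]
      simp only [conj_trivial, sub_zero]
      rw [mul_inv_cancel_left₀ hpos.ne']
      linarith
    · exact le_top
end
end

noncomputable section
section
variable {E : Type*} [NormedAddCommGroup E] [InnerProductSpace ℝ E]

theorem rscale_pos {ξ : ℝ} (hξ : 0 < ξ) (f : E → EReal) : rscale ξ f = smulE ξ f := by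
  unfold rscale smulE
  rw [if_neg hξ.ne']

theorem prox_smul_spec [CompleteSpace E] {f : E → EReal} (hK : Convex ℝ (epiR f))
    (hcl : IsClosed (epiR f)) (hne : (epiR f).Nonempty) (a : E) (m : ℝ)
    (hm : ∀ q ∈ epiR f, inner ℝ a q.1 - m ≤ q.2) {ξ : ℝ} (hξ : 0 < ξ) (x : E) :
    ∃ ρ : ℝ, f (prox (smulE ξ f) x) = ρ ∧
      ∀ q ∈ epiR f, ξ * ρ + ‖x - prox (smulE ξ f) x‖ ^ 2 / 2 ≤ ξ * q.2 + ‖x - q.1‖ ^ 2 / 2 := by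
  have hmem : ∀ q ∈ epiR f, (q.1, ξ * q.2) ∈ epiR (smulE ξ f) := by
    intro q hq
    rw [epiR_smulE hξ, Set.mem_preimage, inv_mul_cancel_left₀ hξ.ne']
    exact hq
  obtain ⟨q0, hq0⟩ := hne
  obtain ⟨ρ, h1, h2⟩ := prox_spec (epiR_smulE_convex hξ hK) (epiR_smulE_closed hξ hcl)
    ⟨_, hmem q0 hq0⟩ x (ξ * (inner ℝ a x - m) - ξ ^ 2 * ‖a‖ ^ 2 / 2) (by
      intro q hq
      rw [epiR_smulE hξ] at hq
      have h := hm _ hq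
      simp only at h
      rw [le_inv_mul_iff₀ hξ] at h
      have h3 := sq_nonneg ‖(x - q.1) - ξ • a‖
      rw [norm_sub_sq_real (x - q.1), inner_smul_right, norm_smul, mul_pow, Real.norm_eq_abs,
        sq_abs, inner_sub_left, real_inner_comm a x, real_inner_comm a q.1] at h3
      nlinarith)
  refine ⟨ξ⁻¹ * ρ, ?_, ?_⟩
  · generalize prox (smulE ξ f) x = P at *
    unfold smulE at h1
    generalize f P = c at *
    induction c with
    | bot => rw [EReal.coe_mul_bot_of_pos hξ] at h1; exact absurd h1.symm (EReal.coe_ne_bot _)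
    | top => rw [EReal.coe_mul_top_of_pos hξ] at h1; exact absurd h1.symm (EReal.coe_ne_top _)
    | coe c =>
      rw [← EReal.coe_mul, EReal.coe_eq_coe_iff] at h1
      rw [← h1, inv_mul_cancel_left₀ hξ.ne']
  · intro q hq
    rw [mul_inv_cancel_left₀ hξ.ne']
    exact h2 _ (hmem q hq)
end
end

/-- Proposition 4.3(ii). -/
theorem stmt17 {H G : Type*} [NormedAddCommGroup H] [InnerProductSpace ℝ H] [CompleteSpace H]
    [NormedAddCommGroup G] [InnerProductSpace ℝ G] [CompleteSpace G]
    (φ : H → EReal) (s : G → EReal) (hφ : IsGamma0 φ)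
    (hc1 : ∀ u : H, (⊥ < fconj φ u ∧ fconj φ u ≤ 0) ∨ fconj φ u = ⊤)
    (hc2 : ∃ u : H, ⊥ < fconj φ u ∧ fconj φ u < 0)
    (hs : IsGamma0 s)
    (hS : ∃ v : G, 0 < s v ∧ s v < ⊤)
    (γ : ℝ) (hγ : 0 < γ) (x : H) (y : G) (hmem : (x, y) ∈ Xi2 φ s γ) :
    eta9eq φ s γ x y 0 ∧ (∀ η : ℝ, 0 ≤ η → eta9eq φ s γ x y η → η = 0) ∧
    prox (smulE γ (persp φ s)) (pairHG x y) =
      pairHG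
        (x - γ • prox (smulE (γ⁻¹ * (hautEnv s (projC (closure (convexHull ℝ (sdom s))) y)).toReal)
          (fconj φ)) (γ⁻¹ • x))
        (projC (closure (convexHull ℝ (sdom s))) y) := by
  obtain ⟨⟨hσ0, hσ1⟩, hψq⟩ := hmem
  simp only at hσ0 hσ1 hψq
  obtain ⟨v0, hv0⟩ := hS
  have hv0' : v0 ∈ sdom s := hv0
  have hCne : (closure (convexHull ℝ (sdom s))).Nonempty :=
    ⟨v0, subset_closure (subset_convexHull ℝ _ hv0')⟩
  have hCcv : Convex ℝ (closure (convexHull ℝ (sdom s))) := (convex_convexHull ℝ _).closure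
  have hprojvar := projC_var hCcv isClosed_closure hCne y
  obtain ⟨hpC, hpmin⟩ := projC_spec hCcv isClosed_closure hCne y
  have hdomne : (edom (hautEnv s)).Nonempty := ⟨v0, lt_of_le_of_lt (haut_le s hv0') hv0.2⟩
  have hprox0 : prox (rscale 0 (hautEnv s)) y = projC (closure (convexHull ℝ (sdom s))) y := by
    rw [prox_rscale_zero hdomne, haut_closure]
  have hclos := haut_closure s
  set C := closure (convexHull ℝ (sdom s)) with hC
  set p := projC C y with hp
  set τ := (hautEnv s p).toReal with hτ
  have hτ' : hautEnv s p = τ := (EReal.coe_toReal hσ1.ne (ne_bot_of_gt hσ0)).symm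
  have hτpos : 0 < τ := by rw [hτ'] at hσ0; exact_mod_cast hσ0
  set t := γ⁻¹ * τ with ht
  have htpos : 0 < t := by positivity
  obtain ⟨w0, hw0⟩ := hφ.1
  have hw0b := hφ.2.1 w0
  have hψmin : ∀ k ∈ epiR (fconj φ), inner ℝ w0 k.1 - (φ w0).toReal ≤ k.2 := by
    intro k hk
    have := (fconj_le_iff φ k.1 k.2).1 hk w0
    rw [← EReal.coe_toReal hw0 hw0b, EReal.coe_le_coe_iff] at this
    linarith
  set q := prox (smulE t (fconj φ)) (γ⁻¹ • x) with hq
  have hqepi : (q, (0:ℝ)) ∈ epiR (fconj φ) := by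
    show fconj φ q ≤ ((0:ℝ) : EReal)
    rw [hψq]; simp
  have hψspec : ∀ ξ : ℝ, 0 < ξ → ∃ ρ : ℝ, fconj φ (prox (smulE ξ (fconj φ)) (γ⁻¹ • x)) = ρ ∧
      ∀ k ∈ epiR (fconj φ), ξ * ρ + ‖γ⁻¹ • x - prox (smulE ξ (fconj φ)) (γ⁻¹ • x)‖ ^ 2 / 2
        ≤ ξ * k.2 + ‖γ⁻¹ • x - k.1‖ ^ 2 / 2 := fun ξ hξ =>
    prox_smul_spec (epiR_fconj_convex φ) (epiR_fconj_closed φ) ⟨_, hqepi⟩ w0 _ hψmin hξ _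
  have hqmin : ∀ k ∈ epiR (fconj φ), ‖γ⁻¹ • x - q‖ ^ 2 / 2
        ≤ t * k.2 + ‖γ⁻¹ • x - k.1‖ ^ 2 / 2 := by
    obtain ⟨ρ, h1, h2⟩ := hψspec t htpos
    rw [← hq] at h1 h2
    rw [hψq] at h1
    have : ρ = 0 := by exact_mod_cast h1.symm
    intro k hk
    have := h2 k hk
    subst ρ
    linarith
  refine ⟨?_, ?_, ?_⟩
  · unfold eta9eq
    rw [mul_zero, hprox0, ← hτ, ← ht, rscale_pos htpos, ← hq, hψq]
    simp
  · intro η hη hE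
    by_contra hne
    have hηpos : 0 < η := lt_of_le_of_ne hη (Ne.symm hne)
    unfold eta9eq at hE
    have hγη : 0 < γ * η := by positivity
    rw [rscale_pos hγη] at hE
    obtain ⟨ρ, h1, h2⟩ := prox_smul_spec (f := hautEnv s) (epiR_fconj_convex _)
      (epiR_fconj_closed _) ⟨(p, τ), hτ'.le⟩ 0 0 (fun k hk => by
        have : (0:EReal) ≤ k.2 := (haut_nonneg s k.1).trans hk
        have : 0 ≤ k.2 := by exact_mod_cast this
        simpa using this) hγη y
    set pη := prox (smulE (γ * η) (hautEnv s)) y with hpη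
    have hρ0 : 0 ≤ ρ := by
      have := haut_nonneg s pη
      rw [h1] at this
      exact_mod_cast this
    have hρτ : ρ ≤ τ := by
      have h3 := h2 (p, τ) hτ'.le
      simp only at h3
      have h4 : pη ∈ C := by
        rw [← hclos]
        exact subset_closure (by show hautEnv s pη < ⊤; rw [h1]; exact EReal.coe_lt_top _)
      have h5 := hpmin pη h4
      have h6 : ‖y - p‖ ^ 2 ≤ ‖y - pη‖ ^ 2 := by gcongr
      have : γ * η * ρ ≤ γ * η * τ := by linarith
      exact le_of_mul_le_mul_left this hγη
    rw [h1, EReal.toReal_coe] at hE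
    have hfin : ∀ u : H, fconj φ u + (η : EReal) = 0 →
        (u, -η) ∈ epiR (fconj φ) := by
      intro u hu
      show fconj φ u ≤ ((-η : ℝ) : EReal)
      generalize fconj φ u = c at *
      induction c with
      | bot => simp
      | top => simp at hu
      | coe c =>
        have : c + η = 0 := by exact_mod_cast hu
        rw [EReal.coe_le_coe_iff]; linarith
    have hk := hfin _ hE
    have hm1 := hqmin _ hk
    simp only at hm1
    rcases hρ0.eq_or_lt with h0 | h0
    · rw [← h0, mul_zero, prox_rscale_zero ⟨q, by
        show fconj φ q < ⊤
        rw [hψq]; exact EReal.zero_lt_top⟩] at hm1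
      have hqd : q ∈ edom (fconj φ) := by
        show fconj φ q < ⊤
        rw [hψq]; exact EReal.zero_lt_top
      obtain ⟨-, h6⟩ := projC_spec (edom_convex (epiR_fconj_convex φ)).closure isClosed_closure
        ⟨q, subset_closure hqd⟩ (γ⁻¹ • x)
      have h7 := h6 q (subset_closure hqd)
      have h8 : ‖γ⁻¹ • x - projC (closure (edom (fconj φ))) (γ⁻¹ • x)‖ ^ 2 ≤
        ‖γ⁻¹ • x - q‖ ^ 2 := by gcongr
      nlinarith [mul_pos htpos hηpos]
    · have hξ : 0 < γ⁻¹ * ρ := by positivity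
      rw [rscale_pos hξ] at hm1 hE
      obtain ⟨ρ', h6, h7⟩ := hψspec _ hξ
      have hρ' : ρ' = -η := by
        rw [h6] at hE
        have : ρ' + η = 0 := by exact_mod_cast hE
        linarith
      have h8 := h7 _ hqepi
      simp only [mul_zero, zero_add] at h8
      rw [hρ'] at h8
      rcases hρτ.eq_or_lt with h9 | h9
      · rw [h9, ← ht, ← hq, hψq] at h6
        have : ρ' = 0 := by exact_mod_cast h6.symm
        exact hne (by linarith)
      · have : γ⁻¹ * ρ < t := by rw [ht]; gcongr
        nlinarith [mul_pos (sub_pos.2 this) hηpos]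
  · set w := x - γ • q with hw
    set z := τ⁻¹ • w with hz
    have hwz : τ • z = w := by rw [hz, smul_inv_smul₀ hτpos.ne']
    have htz : γ⁻¹ • x - q = t • z := by
      rw [ht, mul_smul, hwz, hw, smul_sub, inv_smul_smul₀ hγ.ne']
    have hsub : ∀ (u : H) (r : ℝ), fconj φ u ≤ (r : EReal) → inner ℝ z (u - q) ≤ r := by
      intro u r hur
      have h1 := var_ineq (epiR_smulE_convex htpos (epiR_fconj_convex φ)) (x := γ⁻¹ • x)
        (p := q) (ρ := 0) (by rw [epiR_smulE htpos]; simpa using hqepi) (by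
          intro k hk
          rw [epiR_smulE htpos] at hk
          have := hqmin _ hk
          simp only at this
          rw [mul_inv_cancel_left₀ htpos.ne'] at this
          linarith) (u, t * r) (by
            rw [epiR_smulE htpos, Set.mem_preimage, inv_mul_cancel_left₀ htpos.ne']; exact hur)
      simp only at h1
      rw [htz, inner_smul_left, zero_add] at h1
      exact le_of_mul_le_mul_left h1 htpos
    have hφz := fm_le hφ hψq.le hsub
    have hup := persp_le φ s hφz hpC hτ'
    rw [hwz, ← real_inner_smul_left, hwz] at hup
    have hlow := le_persp φ s q hψq.le (γ⁻¹ • (y - p)) (inner ℝ (γ⁻¹ • (y - p)) p) (by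
      intro v hv
      have := hprojvar v (subset_closure (subset_convexHull ℝ _ hv))
      rw [inner_sub_right] at this
      rw [inner_smul_left, inner_smul_left]
      have hg : (0:ℝ) < γ⁻¹ := by positivity
      simp only [conj_trivial]
      nlinarith)
    set P := pairHG w p with hP
    have hP1 : P.fst = w := rfl
    have hP2 : P.snd = p := rfl
    have hX1 : (pairHG x y).fst = x := rfl
    have hX2 : (pairHG x y).snd = y := rfl
    set X := pairHG x y with hX
    set ρ := γ * inner ℝ w q with hρ
    have hFP : smulE γ (persp φ s) P ≤ (ρ : EReal) := by
      unfold smulE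
      rw [mul_le_coe_iff hγ, hρ, inv_mul_cancel_left₀ hγ.ne']
      exact hup
    have hstrong : ∀ Q (r : ℝ), smulE γ (persp φ s) Q ≤ (r : EReal) →
        ρ + ‖X - P‖ ^ 2 / 2 + ‖Q - P‖ ^ 2 / 2 ≤ r + ‖X - Q‖ ^ 2 / 2 := by
      intro Q r hQ
      unfold smulE at hQ
      rw [mul_le_coe_iff hγ] at hQ
      have h1 := (hlow Q).trans hQ
      rw [EReal.coe_le_coe_iff, le_inv_mul_iff₀ hγ] at h1
      have h2 : inner ℝ (X - P) (Q - P) =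
          γ * (inner ℝ q Q.fst + inner ℝ (γ⁻¹ • (y - p)) Q.snd - inner ℝ (γ⁻¹ • (y - p)) p) - ρ := by
        rw [WithLp.prod_inner_apply]
        change inner ℝ (x - w) (Q.fst - w) + inner ℝ (y - p) (Q.snd - p) = _
        have : x - w = γ • q := by rw [hw]; abel
        rw [this, hρ, inner_smul_left, inner_smul_left, inner_smul_left, inner_sub_right q,
          inner_sub_right (y - p), real_inner_comm q w]
        simp only [conj_trivial]
        field_simp
        ring
      have h3 : X - Q = (X - P) - (Q - P) := by abel
      rw [h3, norm_sub_sq_real (X - P), h2]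
      linarith
    have hpred : ∀ Q, smulE γ (persp φ s) P + ((‖X - P‖ ^ 2 / 2 : ℝ) : EReal)
        ≤ smulE γ (persp φ s) Q + ((‖X - Q‖ ^ 2 / 2 : ℝ) : EReal) := by
      intro Q
      refine (add_le_add_left hFP _).trans ?_
      have h1 := hstrong Q
      generalize smulE γ (persp φ s) Q = c at *
      induction c with
      | bot =>
        have := h1 (ρ + ‖X - P‖ ^ 2 / 2 + ‖Q - P‖ ^ 2 / 2 - ‖X - Q‖ ^ 2 / 2 - 1) bot_le
        linarith
      | top => simp
      | coe c =>
        have := h1 c le_rfl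
        have h0 := sq_nonneg ‖Q - P‖
        rw [← EReal.coe_add, ← EReal.coe_add, EReal.coe_le_coe_iff]
        linarith
    have hspec : ∀ Q, smulE γ (persp φ s) (prox (smulE γ (persp φ s)) X) +
        ((‖X - prox (smulE γ (persp φ s)) X‖ ^ 2 / 2 : ℝ) : EReal)
        ≤ smulE γ (persp φ s) Q + ((‖X - Q‖ ^ 2 / 2 : ℝ) : EReal) :=
      Classical.epsilon_spec (p := fun P => ∀ Q, smulE γ (persp φ s) P +
        ((‖X - P‖ ^ 2 / 2 : ℝ) : EReal)
        ≤ smulE γ (persp φ s) Q + ((‖X - Q‖ ^ 2 / 2 : ℝ) : EReal)) ⟨P, hpred⟩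
    set P' := prox (smulE γ (persp φ s)) X with hP'
    have h1 := (hspec P).trans (add_le_add_left hFP _)
    have h2 := hstrong P' (ρ + ‖X - P‖ ^ 2 / 2 - ‖X - P'‖ ^ 2 / 2) (by
      generalize smulE γ (persp φ s) P' = c at *
      induction c with
      | bot => exact bot_le
      | top =>
        rw [EReal.top_add_coe, ← EReal.coe_add, top_le_iff] at h1
        exact absurd h1 (EReal.coe_ne_top _)
      | coe c =>
        rw [← EReal.coe_add, ← EReal.coe_add, EReal.coe_le_coe_iff] at h1
        rw [EReal.coe_le_coe_iff]
        linarith)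
    have h3 : ‖P' - P‖ ^ 2 ≤ 0 := by linarith
    have h4 : ‖P' - P‖ = 0 := by
      have := sq_nonneg ‖P' - P‖
      exact pow_eq_zero_iff two_ne_zero |>.1 (le_antisymm h3 this)
    exact sub_eq_zero.1 (norm_eq_zero.1 h4)
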